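/- Let α, β ≥ 0 be real numbers. Then there exists a constant C > 0 such that for every nonzero n ∈ ℤ³, the sum of ⟨n₁⟩^{-2α} ⟨n − n₁⟩^{-2β} over all n₁ ∈ ℤ³ satisfying |n|/2 ≤ |n₁| ≤ 2|n| and |n − n₁| ≥ |n|/2 is at most C ⟨n⟩^{3 − 2α − 2β}. -/

import Mathlib

/-- Euclidean norm of a lattice point `n ∈ ℤ³`. -/
noncomputable def znorm (n : Fin 3 → ℤ) : ℝ := Real.sqrt (∑ i, ((n i : ℝ)) ^ 2)

/-- Japanese bracket `⟨n⟩ = (1 + |n|²)^{1/2}` of a lattice point `n ∈ ℤ³`. -/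
noncomputable def jb (n : Fin 3 → ℤ) : ℝ := Real.sqrt (1 + ∑ i, ((n i : ℝ)) ^ 2)

theorem jb_pos_aux (n : Fin 3 → ℤ) : 1 ≤ jb n := by
  unfold jb
  rw [Real.one_le_sqrt]
  have : 0 ≤ ∑ i, ((n i : ℝ)) ^ 2 := Finset.sum_nonneg fun i _ => sq_nonneg _
  linarith

theorem jb_half_aux (n m : Fin 3 → ℤ) (h : znorm n / 2 ≤ znorm m) : jb n / 2 ≤ jb m := by
  unfold jb
  unfold znorm at h
  have a : 0 ≤ ∑ i, ((n i : ℝ)) ^ 2 := Finset.sum_nonneg fun i _ => sq_nonneg _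
  have b : 0 ≤ ∑ i, ((m i : ℝ)) ^ 2 := Finset.sum_nonneg fun i _ => sq_nonneg _
  generalize (∑ i, ((n i : ℝ)) ^ 2) = A at *
  generalize (∑ i, ((m i : ℝ)) ^ 2) = B at *
  have h2 : (Real.sqrt A / 2) ^ 2 ≤ Real.sqrt B ^ 2 := by gcongr
  rw [div_pow, Real.sq_sqrt a, Real.sq_sqrt b] at h2
  apply Real.le_sqrt_of_sq_le
  rw [div_pow, Real.sq_sqrt (by linarith)]
  linarith

theorem jb_pow_aux (n m : Fin 3 → ℤ) (h : znorm n / 2 ≤ znorm m) (a : ℝ) (ha : 0 ≤ a) :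
    jb m ^ (-(2 * a)) ≤ 2 ^ (2 * a) * jb n ^ (-(2 * a)) := by
  have h1 := jb_half_aux n m h
  have h2 := jb_pos_aux n
  calc jb m ^ (-(2 * a)) ≤ (jb n / 2) ^ (-(2 * a)) :=
        Real.rpow_le_rpow_of_nonpos (by linarith) h1 (by linarith)
    _ = _ := by
      rw [Real.div_rpow (by linarith) (by norm_num), Real.rpow_neg (x := 2) (by norm_num)]
      field_simp

theorem convolution_resonant_region (α β : ℝ) (hα : 0 ≤ α) (hβ : 0 ≤ β) :
    ∃ C > 0, ∀ n : Fin 3 → ℤ, n ≠ 0 →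
      ∑' n₁ : {m : Fin 3 → ℤ //
          znorm n / 2 ≤ znorm m ∧ znorm m ≤ 2 * znorm n ∧ znorm n / 2 ≤ znorm (n - m)},
        jb n₁.1 ^ (-(2 * α)) * jb (n - n₁.1) ^ (-(2 * β))
      ≤ C * jb n ^ (3 - 2 * α - 2 * β) := by
  refine ⟨125 * (2 ^ (2 * α) * 2 ^ (2 * β)), by positivity, fun n _ => ?_⟩
  have hj := jb_pos_aux n
  have hj0 : 0 < jb n := by linarith
  set B : ℝ := (2 ^ (2 * α) * jb n ^ (-(2 * α))) * (2 ^ (2 * β) * jb n ^ (-(2 * β))) with hB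
  have hB0 : 0 ≤ B := by positivity
  have hzj : znorm n ≤ jb n := Real.sqrt_le_sqrt (by linarith)
  set N : ℕ := ⌊2 * jb n⌋₊ with hN
  have hNle : (N : ℝ) ≤ 2 * jb n := Nat.floor_le (by linarith)
  let S : Finset (Fin 3 → ℤ) := Fintype.piFinset (fun _ => Finset.Icc (-(N : ℤ)) N)
  have hcard : (S.card : ℝ) ≤ 125 * jb n ^ (3 : ℝ) := by
    have h1 : S.card = (2 * N + 1) ^ 3 := by
      simp only [S, Fintype.card_piFinset, Int.card_Icc, Finset.prod_const, Finset.card_univ,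
        Fintype.card_fin]
      congr 1
      omega
    rw [h1]
    push_cast
    calc (2 * (N : ℝ) + 1) ^ 3 ≤ (5 * jb n) ^ 3 := by gcongr; linarith
      _ = 125 * jb n ^ (3 : ℝ) := by
        rw [mul_pow, ← Real.rpow_natCast (jb n)]; norm_num
  let T : Set (Fin 3 → ℤ) := {m | znorm n / 2 ≤ znorm m ∧ znorm m ≤ 2 * znorm n ∧
    znorm n / 2 ≤ znorm (n - m)}
  let f : (Fin 3 → ℤ) → ℝ := fun m => jb m ^ (-(2 * α)) * jb (n - m) ^ (-(2 * β))
  have hTS : ∀ m ∈ T, m ∈ S := by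
    rintro m ⟨-, h, -⟩
    simp only [S, Fintype.mem_piFinset, Finset.mem_Icc]
    intro i
    have h1 : |(m i : ℝ)| ≤ znorm m := by
      apply Real.abs_le_sqrt
      exact Finset.single_le_sum (f := fun i => ((m i : ℝ)) ^ 2) (fun i _ => sq_nonneg _)
        (Finset.mem_univ i)
    have h2 : ((m i).natAbs : ℝ) ≤ 2 * jb n := by
      rw [Nat.cast_natAbs, Int.cast_abs]; linarith
    have h3 : (m i).natAbs ≤ N := Nat.le_floor h2
    omega
  have key : ∑' m : T, f m ≤ 125 * jb n ^ (3 : ℝ) * B := by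
    rw [tsum_subtype T f, tsum_eq_sum (s := S)
      (fun m hm => Set.indicator_of_notMem (fun h => hm (hTS m h)) f)]
    calc _ ≤ S.card • B := by
          apply Finset.sum_le_card_nsmul
          intro m _
          apply Set.indicator_le' _ (fun _ _ => hB0) m (g := fun _ => B)
          rintro m ⟨h1, -, h3⟩
          exact mul_le_mul (jb_pow_aux n m h1 α hα) (jb_pow_aux n (n - m) h3 β hβ)
            (Real.rpow_nonneg (Real.sqrt_nonneg _) _) (by positivity)
      _ ≤ _ := by rw [nsmul_eq_mul]; gcongr
  refine key.trans (le_of_eq ?_)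
  have : (3 - 2 * α - 2 * β) = 3 + -(2 * α) + -(2 * β) := by ring
  rw [this, Real.rpow_add hj0, Real.rpow_add hj0, hB]
  ring
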